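/- arXiv:1505.04751 — 2 statements merged into one kernel-verified Lean document; each statement's English description precedes it below -/
import Mathlib

section
/- The set of normalized B-harmonic vectors is a convex subset of [0,∞)^V whose set of extreme points is exactly {φ^C : C a B-harmonic component of B}. -/
open Filter Finset

/-- The spectral radius of a real matrix, `ρ(M) = lim_n ‖Mⁿ‖^{1/n}`
(computed with the entrywise ℓ¹-norm, and as a `limsup` so that it is always defined;
it is `0` for the matrix over the empty index type). -/
noncomputable def specRad {n : Type*} [Fintype n] [DecidableEq n] (M : Matrix n n ℝ) : ℝ :=
  Filter.limsup (fun k : ℕ => (∑ i, ∑ j, |(M ^ k) i j|) ^ ((1 : ℝ) / (k : ℝ))) Filter.atTop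

/-- The spectral radius `ρ(B^S)` of the submatrix of `B` obtained by restricting to `S × S`. -/
noncomputable def specRadOn {V : Type*} [Fintype V] (B : Matrix V V ℝ) (S : Set V) : ℝ :=
  letI : Fintype S := (Set.toFinite S).fintype
  letI : DecidableEq S := Classical.decEq _
  specRad (fun i j : S => B i.1 j.1)

variable {V : Type*} [Fintype V]

/-- A vertex `s` is a sink for `B` when the row of `B` at `s` vanishes. -/
def IsSink (B : Matrix V V ℝ) (s : V) : Prop := ∀ w, B s w = 0

/-- `ψ` is `B`-harmonic: `Σ_w B v w * ψ w = ψ v` for all `v`. -/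
def IsHarmonic (B : Matrix V V ℝ) (ψ : V → ℝ) : Prop :=
  ∀ v, ∑ w, B v w * ψ w = ψ v

/-- `ψ` is almost `B`-harmonic: `Σ_w B v w * ψ w = ψ v` for all `v` that are not sinks. -/
def IsAlmostHarmonic (B : Matrix V V ℝ) (ψ : V → ℝ) : Prop :=
  ∀ v, ¬ IsSink B v → ∑ w, B v w * ψ w = ψ v

/-- A sink `s` is `B`-summable when `Σ_n (Bⁿ)_{v s} < ∞` for all `v`. -/
def IsSummableSink [DecidableEq V] (B : Matrix V V ℝ) (s : V) : Prop :=
  IsSink B s ∧ ∀ v, Summable (fun n : ℕ => (B ^ n) v s)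

/-- The vector `φ^s` associated to a `B`-summable sink `s`. -/
noncomputable def phiSink [DecidableEq V] (B : Matrix V V ℝ) (s : V) : V → ℝ :=
  fun v => (∑' n : ℕ, (B ^ n) v s) / (∑ w, ∑' n : ℕ, (B ^ n) w s)

/-- `v ⤳ w`: `(Bⁿ)_{vw} > 0` for some `n ≥ 0`. -/
def Reaches [DecidableEq V] (B : Matrix V V ℝ) (v w : V) : Prop :=
  ∃ n : ℕ, 0 < (B ^ n) v w

/-- The closure of a set of vertices: all vertices that reach it. -/
def closureSet [DecidableEq V] (B : Matrix V V ℝ) (F : Set V) : Set V :=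
  {v | ∃ w ∈ F, Reaches B v w}

/-- A component: an equivalence class of `∼` on which `B` is nonzero. -/
def IsComponent [DecidableEq V] (B : Matrix V V ℝ) (C : Set V) : Prop :=
  (∃ v, C = {w | Reaches B v w ∧ Reaches B w v}) ∧
  ∃ v ∈ C, ∃ w ∈ C, B v w ≠ 0

/-- A `B`-harmonic component. -/
def IsHarmonicComponent [DecidableEq V] (B : Matrix V V ℝ) (C : Set V) : Prop :=
  IsComponent B C ∧ specRadOn B C = 1 ∧
  ((closureSet B C \ C).Nonempty → specRadOn B (closureSet B C \ C) < 1)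

/-- The property characterizing the vector `φ^C` of a `B`-harmonic component `C`. -/
def IsPhiC [DecidableEq V] (B : Matrix V V ℝ) (C : Set V) (φ : V → ℝ) : Prop :=
  (∀ v, 0 ≤ φ v) ∧ (∑ v, φ v = 1) ∧ IsHarmonic B φ ∧
  (∀ v ∈ C, ∑ w, Set.indicator C (fun w => B v w * φ w) w = φ v) ∧
  (∀ v, φ v ≠ 0 ↔ v ∈ closureSet B C)

open scoped Classical in
/-- The vector `φ^C` of a `B`-harmonic component `C` (defined by choice; for a `B`-harmonic
component it is unique). -/
noncomputable def phiComp [DecidableEq V] (B : Matrix V V ℝ) (C : Set V) : V → ℝ :=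
  if h : ∃ φ : V → ℝ, IsPhiC B C φ then h.choose else 0

/-!
A nonnegative matrix of spectral radius less than `r` satisfies a maximum principle: `M x ≤ r x`
forces `0 ≤ x`, since `x ≥ r⁻ᵏ Mᵏ x → 0`. So if `ρ(B^S) < 1`, a vector that is superharmonic on `S`
and nonnegative off `S` is nonnegative, and nonnegative values off `S` extend uniquely to a
vector that is harmonic on `S`.

For a harmonic component `C`, extending a Perron eigenvector of `B^C` to `C̄ \ C` gives `φ^C`; by the
maximum principle it is the only normalized harmonic vector vanishing off `C̄`, which makes it
extreme. Conversely, let `ψ` be normalized harmonic and `C` a communicating class that no edge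
leaves inside the support of `ψ`. Then `C` is a harmonic component and `ψ ≥ ε φ^C` for some `ε > 0`,
so `ψ = φ^C` when `ψ` is extreme.
-/

open scoped Topology

section SpectralRadius

variable {n : Type*} [Fintype n]

/-- The entrywise `ℓ¹`-norm of a real matrix, the norm through which `specRad` is defined. -/
def entryNorm (M : Matrix n n ℝ) : ℝ := ∑ i, ∑ j, |M i j|

lemma entryNorm_nonneg (M : Matrix n n ℝ) : 0 ≤ entryNorm M :=
  sum_nonneg fun _ _ => sum_nonneg fun _ _ => abs_nonneg _

lemma sum_abs_row_le_entryNorm (M : Matrix n n ℝ) (i : n) : ∑ j, |M i j| ≤ entryNorm M :=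
  single_le_sum (f := fun i => ∑ j, |M i j|) (fun _ _ => sum_nonneg fun _ _ => abs_nonneg _)
    (mem_univ i)

lemma abs_apply_le_entryNorm (M : Matrix n n ℝ) (i j : n) : |M i j| ≤ entryNorm M :=
  (single_le_sum (f := fun j => |M i j|) (fun _ _ => abs_nonneg _) (mem_univ j)).trans
    (sum_abs_row_le_entryNorm M i)

lemma entryNorm_mul_le (M N : Matrix n n ℝ) : entryNorm (M * N) ≤ entryNorm M * entryNorm N :=
  calc entryNorm (M * N)
      ≤ ∑ i, ∑ j, ∑ l, |M i l| * |N l j| := by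
        refine sum_le_sum fun i _ => sum_le_sum fun j _ => ?_
        simpa only [Matrix.mul_apply, abs_mul] using
          abs_sum_le_sum_abs (fun l => M i l * N l j) univ
    _ = ∑ i, ∑ l, |M i l| * ∑ j, |N l j| := by
        refine sum_congr rfl fun i _ => ?_
        rw [sum_comm]
        simp only [mul_sum]
    _ ≤ ∑ i, ∑ l, |M i l| * entryNorm N := by
        gcongr with i _ l _
        exact sum_abs_row_le_entryNorm N l
    _ = entryNorm M * entryNorm N := by simp only [entryNorm, sum_mul]

variable [DecidableEq n]

lemma entryNorm_pow_le (M : Matrix n n ℝ) {k : ℕ} (hk : k ≠ 0) :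
    entryNorm (M ^ k) ≤ entryNorm M ^ k := by
  induction k, Nat.one_le_iff_ne_zero.2 hk using Nat.le_induction with
  | base => simp only [pow_one, le_refl]
  | succ k hk ih =>
    rw [pow_succ, pow_succ]
    exact (entryNorm_mul_le _ _).trans
      (mul_le_mul_of_nonneg_right (ih (by lia)) (entryNorm_nonneg M))

lemma specRad_eq_limsup (M : Matrix n n ℝ) :
    specRad M = limsup (fun k : ℕ => entryNorm (M ^ k) ^ (k : ℝ)⁻¹) atTop := by
  simp only [specRad, entryNorm, one_div]

lemma entryNorm_pow_rpow_inv_nonneg (M : Matrix n n ℝ) (k : ℕ) :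
    0 ≤ entryNorm (M ^ k) ^ (k : ℝ)⁻¹ :=
  Real.rpow_nonneg (entryNorm_nonneg _) _

lemma isBoundedUnder_entryNorm_pow_rpow_inv (M : Matrix n n ℝ) :
    IsBoundedUnder (· ≤ ·) atTop fun k : ℕ => entryNorm (M ^ k) ^ (k : ℝ)⁻¹ := by
  refine isBoundedUnder_of_eventually_le (a := entryNorm M) ?_
  filter_upwards [eventually_ne_atTop 0] with k hk
  calc entryNorm (M ^ k) ^ (k : ℝ)⁻¹ ≤ (entryNorm M ^ k) ^ (k : ℝ)⁻¹ :=
        Real.rpow_le_rpow (entryNorm_nonneg _) (entryNorm_pow_le M hk) (by positivity)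
    _ = entryNorm M := Real.pow_rpow_inv_natCast (entryNorm_nonneg M) hk

lemma specRad_nonneg (M : Matrix n n ℝ) : 0 ≤ specRad M := by
  rw [specRad_eq_limsup]
  exact le_limsup_of_frequently_le (Frequently.of_forall (entryNorm_pow_rpow_inv_nonneg M))
    (isBoundedUnder_entryNorm_pow_rpow_inv M)

lemma eventually_entryNorm_pow_le {M : Matrix n n ℝ} {r : ℝ} (h : specRad M < r) :
    ∀ᶠ k : ℕ in atTop, entryNorm (M ^ k) ≤ r ^ k := by
  rw [specRad_eq_limsup] at h
  filter_upwards [eventually_lt_of_limsup_lt h (isBoundedUnder_entryNorm_pow_rpow_inv M),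
    eventually_ne_atTop 0] with k hk hk0
  calc entryNorm (M ^ k) = (entryNorm (M ^ k) ^ (k : ℝ)⁻¹) ^ k :=
        (Real.rpow_inv_natCast_pow (entryNorm_nonneg _) hk0).symm
    _ ≤ r ^ k := pow_le_pow_left₀ (entryNorm_pow_rpow_inv_nonneg M k) hk.le k

lemma specRad_le_of_entryNorm_pow_le {M : Matrix n n ℝ} {r K : ℝ} (hr : 0 ≤ r) (hK : 0 < K)
    (h : ∀ k, entryNorm (M ^ k) ≤ K * r ^ k) : specRad M ≤ r := by
  have hlim : Tendsto (fun k : ℕ => K ^ (k : ℝ)⁻¹ * r) atTop (𝓝 r) := by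
    simpa using ((tendsto_const_nhds (x := K)).rpow tendsto_inv_atTop_nhds_zero_nat
      (Or.inl hK.ne')).mul_const r
  rw [specRad_eq_limsup, ← hlim.limsup_eq]
  refine limsup_le_limsup ?_ (IsBoundedUnder.isCoboundedUnder_le
    (isBoundedUnder_of ⟨0, entryNorm_pow_rpow_inv_nonneg M⟩)) hlim.isBoundedUnder_le
  filter_upwards [eventually_ne_atTop 0] with k hk
  calc entryNorm (M ^ k) ^ (k : ℝ)⁻¹ ≤ (K * r ^ k) ^ (k : ℝ)⁻¹ :=
        Real.rpow_le_rpow (entryNorm_nonneg _) (h k) (by positivity)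
    _ = K ^ (k : ℝ)⁻¹ * r := by
        rw [Real.mul_rpow hK.le (by positivity), Real.pow_rpow_inv_natCast hr hk]

end SpectralRadius

section OrderedSemiring

open Matrix

variable {m n R : Type*} [Fintype n] [Semiring R] [PartialOrder R] [IsOrderedRing R]
  {M : Matrix m n R} {x y : n → R}

lemma mulVec_le_mulVec_of_nonneg (hM : ∀ i j, 0 ≤ M i j) (hxy : x ≤ y) : M *ᵥ x ≤ M *ᵥ y :=
  fun i => dotProduct_le_dotProduct_of_nonneg_left hxy (hM i)

lemma mulVec_nonneg_of_nonneg (hM : ∀ i j, 0 ≤ M i j) (hx : 0 ≤ x) : 0 ≤ M *ᵥ x :=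
  fun i => dotProduct_nonneg_of_nonneg (hM i) hx

lemma apply_mul_le_mulVec (hM : ∀ i j, 0 ≤ M i j) (hx : 0 ≤ x) (i : m)
    (j : n) : M i j * x j ≤ (M *ᵥ x) i :=
  single_le_sum (f := fun j => M i j * x j) (fun j _ => mul_nonneg (hM i j) (hx j)) (mem_univ j)

end OrderedSemiring

section NonnegativeMatrix

open Matrix

variable {n : Type*} [Fintype n] {M : Matrix n n ℝ} {x : n → ℝ} {r : ℝ}

lemma inv_sum_smul_mem_stdSimplex (hx : 0 ≤ x) (hne : x ≠ 0) :
    (∑ i, x i)⁻¹ • x ∈ stdSimplex ℝ n := by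
  have hsum : 0 < ∑ i, x i := Fintype.sum_pos (hx.lt_of_ne' hne)
  refine ⟨fun i => mul_nonneg (inv_nonneg.2 hsum.le) (hx i), ?_⟩
  simp only [Pi.smul_apply, smul_eq_mul, ← mul_sum, inv_mul_cancel₀ hsum.ne']

variable [DecidableEq n]

lemma pow_mulVec_le_smul (hM : ∀ i j, 0 ≤ M i j) (hr : 0 ≤ r) (h : M *ᵥ x ≤ r • x) (k : ℕ) :
    (M ^ k) *ᵥ x ≤ r ^ k • x := by
  induction k with
  | zero => simp only [pow_zero, one_mulVec, one_smul, le_refl]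
  | succ k ih =>
    calc (M ^ (k + 1)) *ᵥ x = M *ᵥ ((M ^ k) *ᵥ x) := by rw [pow_succ', mulVec_mulVec]
      _ ≤ M *ᵥ (r ^ k • x) := mulVec_le_mulVec_of_nonneg hM ih
      _ = r ^ k • (M *ᵥ x) := mulVec_smul M _ x
      _ ≤ r ^ k • (r • x) := smul_le_smul_of_nonneg_left h (by positivity)
      _ = r ^ (k + 1) • x := by rw [smul_smul, pow_succ]

lemma specRad_le_of_mulVec_le (hM : ∀ i j, 0 ≤ M i j) (hr : 0 ≤ r) (hx : ∀ i, 0 < x i)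
    (h : M *ᵥ x ≤ r • x) : specRad M ≤ r := by
  have hK : 0 ≤ ∑ i, ∑ j, x i / x j :=
    sum_nonneg fun i _ => sum_nonneg fun j _ => (div_pos (hx i) (hx j)).le
  refine specRad_le_of_entryNorm_pow_le hr (add_pos_of_nonneg_of_pos hK one_pos) fun k => ?_
  have hentry (i j : n) : |(M ^ k) i j| ≤ x i / x j * r ^ k := by
    rw [abs_of_nonneg (pow_apply_nonneg hM k i j), div_mul_eq_mul_div, le_div_iff₀ (hx j),
      mul_comm (x i)]
    exact (apply_mul_le_mulVec (pow_apply_nonneg hM k) (fun i => (hx i).le) i j).trans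
      (pow_mulVec_le_smul hM hr h k i)
  calc entryNorm (M ^ k) ≤ ∑ i, ∑ j, x i / x j * r ^ k :=
        sum_le_sum fun i _ => sum_le_sum fun j _ => hentry i j
    _ = (∑ i, ∑ j, x i / x j) * r ^ k := by simp only [sum_mul]
    _ ≤ (∑ i, ∑ j, x i / x j + 1) * r ^ k := by gcongr; linarith

lemma specRad_zero : specRad (0 : Matrix n n ℝ) = 0 :=
  (specRad_le_of_mulVec_le (M := 0) (x := 1) (fun _ _ => le_rfl) le_rfl (fun _ => one_pos)
    (by rw [zero_mulVec, zero_smul])).antisymm (specRad_nonneg 0)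

lemma tendsto_inv_pow_smul_pow_mulVec (h : specRad M < r) (x : n → ℝ) :
    Tendsto (fun k : ℕ => (r ^ k)⁻¹ • ((M ^ k) *ᵥ x)) atTop (𝓝 0) := by
  obtain ⟨s, hMs, hsr⟩ := exists_between h
  have hr0 : 0 < r := (specRad_nonneg M).trans_lt h
  have hs0 : 0 ≤ s := (specRad_nonneg M).trans hMs.le
  have hgeom : Tendsto (fun k : ℕ => (s / r) ^ k * ∑ j, |x j|) atTop (𝓝 0) := by
    simpa using (tendsto_pow_atTop_nhds_zero_of_lt_one (by positivity)
      ((div_lt_one hr0).2 hsr)).mul_const (∑ j, |x j|)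
  refine tendsto_pi_nhds.2 fun i => squeeze_zero_norm' ?_ hgeom
  filter_upwards [eventually_entryNorm_pow_le hMs] with k hk
  have hrow : |((M ^ k) *ᵥ x) i| ≤ s ^ k * ∑ j, |x j| := by
    rw [mul_sum]
    refine (abs_sum_le_sum_abs _ _).trans (sum_le_sum fun j _ => ?_)
    rw [abs_mul]
    exact mul_le_mul_of_nonneg_right ((abs_apply_le_entryNorm _ i j).trans hk) (abs_nonneg _)
  calc ‖((r ^ k)⁻¹ • ((M ^ k) *ᵥ x)) i‖ = (r ^ k)⁻¹ * |((M ^ k) *ᵥ x) i| := by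
        rw [Pi.smul_apply, smul_eq_mul, Real.norm_eq_abs, abs_mul, abs_of_pos (by positivity)]
    _ ≤ (r ^ k)⁻¹ * (s ^ k * ∑ j, |x j|) := by gcongr
    _ = (s / r) ^ k * ∑ j, |x j| := by rw [div_pow]; ring

lemma nonneg_of_mulVec_le (hM : ∀ i j, 0 ≤ M i j) (hr : specRad M < r) (h : M *ᵥ x ≤ r • x) :
    0 ≤ x := by
  have hr0 : 0 < r := (specRad_nonneg M).trans_lt hr
  refine le_of_tendsto' (tendsto_inv_pow_smul_pow_mulVec hr x) fun k => ?_
  rw [inv_smul_le_iff_of_pos (by positivity)]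
  exact pow_mulVec_le_smul hM hr0.le h k

lemma le_specRad_of_le_mulVec (hM : ∀ i j, 0 ≤ M i j) (h : r • x ≤ M *ᵥ x) {i : n}
    (hi : 0 < x i) : r ≤ specRad M := by
  by_contra! hr
  have hneg : 0 ≤ -x := nonneg_of_mulVec_le hM hr (by
    rw [mulVec_neg, smul_neg]
    exact neg_le_neg h)
  exact hi.not_ge (neg_nonneg.1 (hneg i))

lemma exists_nonneg_smul_eq_add_mulVec (hM : ∀ i j, 0 ≤ M i j) (hr : specRad M < r)
    {b : n → ℝ} (hb : 0 ≤ b) : ∃ x, 0 ≤ x ∧ r • x = b + M *ᵥ x := by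
  let T : (n → ℝ) →ₗ[ℝ] n → ℝ := r • LinearMap.id - M.mulVecLin
  have hT (x : n → ℝ) : T x = r • x - M *ᵥ x := rfl
  have hnonneg (x : n → ℝ) (hx : 0 ≤ T x) : 0 ≤ x :=
    nonneg_of_mulVec_le hM hr (sub_nonneg.1 hx)
  have hinj : Function.Injective T := by
    rw [← LinearMap.ker_eq_bot, LinearMap.ker_eq_bot']
    intro x hx
    refine le_antisymm (neg_nonneg.1 (hnonneg (-x) ?_)) (hnonneg x hx.ge)
    rw [map_neg, hx, neg_zero]
  obtain ⟨x, hx⟩ := LinearMap.injective_iff_surjective.1 hinj b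
  exact ⟨x, hnonneg x (hx ▸ hb), by rw [← hx, hT, sub_add_cancel]⟩

lemma exists_mem_stdSimplex_smul_eq_add_mulVec [Nonempty n] (hM : ∀ i j, 0 ≤ M i j)
    (hr : specRad M < r) :
    ∃ x ∈ stdSimplex ℝ n, ∃ c : ℝ, 0 ≤ c ∧ r • x = c • 1 + M *ᵥ x := by
  obtain ⟨u, hu0, hu⟩ := exists_nonneg_smul_eq_add_mulVec hM hr (zero_le_one (α := n → ℝ))
  have hne : u ≠ 0 := by
    rintro rfl
    simp at hu
  refine ⟨_, inv_sum_smul_mem_stdSimplex hu0 hne, (∑ i, u i)⁻¹,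
    inv_nonneg.2 (sum_nonneg fun i _ => hu0 i), ?_⟩
  rw [smul_comm, hu, smul_add, mulVec_smul]

lemma exists_mem_stdSimplex_specRad_smul_eq_add_mulVec [Nonempty n] (hM : ∀ i j, 0 ≤ M i j) :
    ∃ x ∈ stdSimplex ℝ n, ∃ c : ℝ, 0 ≤ c ∧ specRad M • x = c • 1 + M *ᵥ x := by
  -- A cluster point, as `r ↓ ρ(M)`, of the normalized solutions of `r x = c 1 + M x`.
  let r : ℕ → ℝ := fun m => specRad M + 1 / (m + 1)
  have hr : Tendsto r atTop (𝓝 (specRad M)) := by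
    simpa only [add_zero] using
      (tendsto_one_div_add_atTop_nhds_zero_nat (𝕜 := ℝ)).const_add (specRad M)
  have hexists (m : ℕ) := exists_mem_stdSimplex_smul_eq_add_mulVec hM (r := r m)
    (lt_add_of_pos_right _ Nat.one_div_pos_of_nat)
  choose u hu c hc huc using hexists
  obtain ⟨x, hx, φ, hφ, hlim⟩ := (isCompact_stdSimplex ℝ n).tendsto_subseq hu
  have hc_lim (i : n) :
      Tendsto (fun m => c (φ m)) atTop (𝓝 (specRad M * x i - (M *ᵥ x) i)) := by
    have hcont : Continuous fun u : n → ℝ => (M *ᵥ u) i := by fun_prop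
    refine (((hr.comp hφ.tendsto_atTop).mul (tendsto_pi_nhds.1 hlim i)).sub
      ((hcont.tendsto x).comp hlim)).congr fun m => ?_
    have := congrFun (huc (φ m)) i
    simp only [Pi.smul_apply, Pi.add_apply, Pi.one_apply, smul_eq_mul, mul_one] at this
    simp only [Function.comp_apply, this, add_sub_cancel_right]
  obtain ⟨i₀⟩ := ‹Nonempty n›
  refine ⟨x, hx, _, ge_of_tendsto' (hc_lim i₀) fun m => hc _, funext fun i => ?_⟩
  rw [tendsto_nhds_unique (hc_lim i₀) (hc_lim i)]
  simp only [Pi.smul_apply, Pi.add_apply, Pi.one_apply, smul_eq_mul, mul_one, sub_add_cancel]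

theorem exists_mem_stdSimplex_mulVec_eq_specRad_smul [Nonempty n] (hM : ∀ i j, 0 ≤ M i j) :
    ∃ x ∈ stdSimplex ℝ n, M *ᵥ x = specRad M • x := by
  obtain ⟨x, hx, c, hc, hxc⟩ := exists_mem_stdSimplex_specRad_smul_eq_add_mulVec hM
  -- If `c > 0`, then `x > 0` and `M x ≤ (ρ(M) - c) x`, so `ρ(M) ≤ ρ(M) - c`.
  suffices hc0 : c = 0 from ⟨x, hx, by rw [hxc, hc0, zero_smul, zero_add]⟩
  by_contra hne
  have hcpos : 0 < c := hc.lt_of_ne' hne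
  have heq (i : n) : specRad M * x i = c + (M *ᵥ x) i := by simpa using congrFun hxc i
  have hle (i : n) : c ≤ specRad M * x i := by
    rw [heq i]
    exact le_add_of_nonneg_right (mulVec_nonneg_of_nonneg hM hx.1 i)
  have hx1 (i : n) : x i ≤ 1 := (mem_Icc_of_mem_stdSimplex hx i).2
  have hcρ : c ≤ specRad M :=
    (hle (Classical.arbitrary n)).trans (mul_le_of_le_one_right (specRad_nonneg M) (hx1 _))
  have hbound : specRad M ≤ specRad M - c := by
    refine specRad_le_of_mulVec_le hM (sub_nonneg.2 hcρ) (x := x) (fun i => ?_) fun i => ?_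
    · exact pos_of_mul_pos_right (hcpos.trans_le (hle i)) (specRad_nonneg M)
    · calc (M *ᵥ x) i = specRad M * x i - c := by rw [heq i, add_sub_cancel_left]
        _ ≤ specRad M * x i - c * x i := by gcongr; exact mul_le_of_le_one_right hc (hx1 i)
        _ = (specRad M - c) * x i := by ring
  linarith

end NonnegativeMatrix

section Restriction

open Matrix

variable {n : Type*} {M : Matrix n n ℝ} {S : Set n} {f g ψ : n → ℝ}

/-- The submatrix `M^S` padded by zeros to an `n × n` matrix, so that `S` may vary without changing
the index type. -/
noncomputable def restrictMatrix (M : Matrix n n ℝ) (S : Set n) : Matrix n n ℝ :=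
  S.indicator fun v => S.indicator (M v)

lemma restrictMatrix_apply_of_mem {v w : n} (hv : v ∈ S) (hw : w ∈ S) :
    restrictMatrix M S v w = M v w := by
  rw [restrictMatrix, Set.indicator_of_mem hv, Set.indicator_of_mem hw]

lemma restrictMatrix_apply_of_notMem_left {v : n} (hv : v ∉ S) (w : n) :
    restrictMatrix M S v w = 0 := by
  rw [restrictMatrix, Set.indicator_of_notMem hv, Pi.zero_apply]

lemma restrictMatrix_apply_of_notMem_right (v : n) {w : n} (hw : w ∉ S) :
    restrictMatrix M S v w = 0 := by
  by_cases hv : v ∈ S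
  · rw [restrictMatrix, Set.indicator_of_mem hv, Set.indicator_of_notMem hw]
  · exact restrictMatrix_apply_of_notMem_left hv w

lemma restrictMatrix_nonneg (hM : ∀ v w, 0 ≤ M v w) (S : Set n) (v w : n) :
    0 ≤ restrictMatrix M S v w :=
  Set.indicator_nonneg (f := fun v => S.indicator (M v))
    (fun v _ => Set.indicator_nonneg fun w _ => hM v w) v w

variable [Fintype n]

lemma restrictMatrix_mulVec (M : Matrix n n ℝ) (S : Set n) (f : n → ℝ) :
    restrictMatrix M S *ᵥ f = S.indicator (M *ᵥ S.indicator f) := by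
  classical
  ext v
  by_cases hv : v ∈ S <;>
    simp [restrictMatrix, mulVec, dotProduct, Set.indicator_apply, hv]

variable [DecidableEq n]

lemma restrictMatrix_pow_apply_coe [Fintype S] [DecidableEq S] (k : ℕ) (i j : S) :
    (restrictMatrix M S ^ k) i j = ((M.submatrix (↑) (↑) : Matrix S S ℝ) ^ k) i j := by
  induction k generalizing j with
  | zero => simp only [pow_zero, one_apply, Subtype.coe_inj]
  | succ k ih =>
    rw [pow_succ, pow_succ, mul_apply, mul_apply]
    refine (Fintype.sum_of_injective _ Subtype.val_injective _ _ (fun v hv => ?_) fun l => ?_).symm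
    · rw [restrictMatrix_apply_of_notMem_left (by simpa using hv), mul_zero]
    · rw [← ih, restrictMatrix_apply_of_mem l.2 j.2, submatrix_apply]

lemma entryNorm_restrictMatrix_pow [Fintype S] [DecidableEq S] {k : ℕ} (hk : k ≠ 0) :
    entryNorm (restrictMatrix M S ^ k) =
      entryNorm ((M.submatrix (↑) (↑) : Matrix S S ℝ) ^ k) := by
  obtain ⟨m, rfl⟩ := Nat.exists_eq_succ_of_ne_zero hk
  refine (Fintype.sum_of_injective _ Subtype.val_injective _ _ (fun v hv => ?_) fun i =>
    Fintype.sum_of_injective _ Subtype.val_injective _ _ (fun w hw => ?_) fun j => ?_).symm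
  · refine sum_eq_zero fun w _ => ?_
    simp only [pow_succ', mul_apply, abs_eq_zero,
      restrictMatrix_apply_of_notMem_left (show v ∉ S by simpa using hv), zero_mul, sum_const_zero]
  · simp only [pow_succ, mul_apply, abs_eq_zero,
      restrictMatrix_apply_of_notMem_right _ (show w ∉ S by simpa using hw), mul_zero,
      sum_const_zero]
  · rw [restrictMatrix_pow_apply_coe]

lemma specRadOn_eq (M : Matrix n n ℝ) (S : Set n) :
    specRadOn M S = specRad (restrictMatrix M S) := by
  let : Fintype S := (Set.toFinite S).fintype
  let : DecidableEq S := Classical.decEq _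
  rw [specRad_eq_limsup]
  refine (specRad_eq_limsup _).trans (limsup_congr ?_)
  filter_upwards [eventually_ne_atTop 0] with k hk
  rw [entryNorm_restrictMatrix_pow hk]
  rfl

lemma nonneg_of_mulVec_le_on (hM : ∀ v w, 0 ≤ M v w) (hS : specRad (restrictMatrix M S) < 1)
    (hf : ∀ v ∈ S, (M *ᵥ f) v ≤ f v) (hoff : ∀ v ∉ S, 0 ≤ f v) : 0 ≤ f := by
  have hle : restrictMatrix M S *ᵥ S.indicator f ≤ (1 : ℝ) • S.indicator f := by
    rw [one_smul, restrictMatrix_mulVec, Set.indicator_indicator, Set.inter_self]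
    refine fun v => Set.indicator_le_indicator' fun hv => le_trans ?_ (hf v hv)
    refine mulVec_le_mulVec_of_nonneg hM (fun w => ?_) v
    exact Set.indicator_apply_le' (fun _ => le_rfl) (hoff w)
  intro v
  by_cases hv : v ∈ S
  · simpa only [Set.indicator_of_mem hv] using
      nonneg_of_mulVec_le (restrictMatrix_nonneg hM S) hS hle v
  · exact hoff v hv

lemma exists_harmonic_extension (hM : ∀ v w, 0 ≤ M v w) (hS : specRad (restrictMatrix M S) < 1)
    (hg : 0 ≤ g) : ∃ f, 0 ≤ f ∧ (∀ v ∉ S, f v = g v) ∧ ∀ v ∈ S, (M *ᵥ f) v = f v := by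
  have hgoff : 0 ≤ Sᶜ.indicator g := Set.indicator_nonneg fun v _ => hg v
  obtain ⟨x, hx, hxeq⟩ := exists_nonneg_smul_eq_add_mulVec (restrictMatrix_nonneg hM S) hS
    (b := S.indicator (M *ᵥ Sᶜ.indicator g))
    (Set.indicator_nonneg fun v _ => mulVec_nonneg_of_nonneg hM hgoff v)
  rw [one_smul, restrictMatrix_mulVec, ← Set.indicator_add', ← mulVec_add, add_comm] at hxeq
  have hxoff : S.indicator x = x := by
    rw [hxeq, Set.indicator_indicator, Set.inter_self]
  rw [hxoff] at hxeq
  refine ⟨x + Sᶜ.indicator g, add_nonneg hx hgoff, fun v hv => ?_, fun v hv => ?_⟩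
  · rw [Pi.add_apply, hxeq, Set.indicator_of_notMem hv, zero_add, Set.indicator_of_mem hv]
  · rw [Pi.add_apply, Set.indicator_of_notMem (not_not_intro hv), add_zero]
    exact (congrFun hxeq v ▸ Set.indicator_of_mem hv _).symm

lemma specRad_restrictMatrix_le_one (hM : ∀ v w, 0 ≤ M v w) (hψ : 0 ≤ ψ) (hMψ : M *ᵥ ψ ≤ ψ)
    (hpos : ∀ v ∈ S, 0 < ψ v) : specRad (restrictMatrix M S) ≤ 1 := by
  refine specRad_le_of_mulVec_le (x := S.indicator ψ + Sᶜ.indicator 1)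
    (restrictMatrix_nonneg hM S) zero_le_one (fun v => ?_) ?_
  · by_cases hv : v ∈ S <;> simp [hv, hpos]
  · have hind : S.indicator (S.indicator ψ + Sᶜ.indicator 1) = S.indicator ψ := by
      ext v
      by_cases hv : v ∈ S <;> simp [hv]
    rw [one_smul, restrictMatrix_mulVec, hind]
    refine le_add_of_le_of_nonneg ?_ (Set.indicator_nonneg fun _ _ => zero_le_one)
    refine fun v => Set.indicator_le_indicator ((mulVec_le_mulVec_of_nonneg hM ?_ v).trans (hMψ v))
    exact Set.indicator_le_self' fun v _ => hψ v

lemma exists_mem_stdSimplex_indicator_mulVec_eq (hM : ∀ v w, 0 ≤ M v w)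
    (hS : specRad (restrictMatrix M S) = 1) : ∃ x ∈ stdSimplex ℝ n, S.indicator (M *ᵥ x) = x := by
  rcases isEmpty_or_nonempty n with _ | _
  · rw [Subsingleton.elim (restrictMatrix M S) 0, specRad_zero] at hS
    exact absurd hS zero_ne_one
  obtain ⟨x, hx, hMx⟩ := exists_mem_stdSimplex_mulVec_eq_specRad_smul (restrictMatrix_nonneg hM S)
  rw [hS, one_smul, restrictMatrix_mulVec] at hMx
  have hxoff : S.indicator x = x := by
    rw [← hMx, Set.indicator_indicator, Set.inter_self]
  exact ⟨x, hx, by rwa [hxoff] at hMx⟩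

end Restriction

lemma exists_le_mul_and_eq_mul {ι : Type*} {S : Set ι} (hS : S.Finite) (hne : S.Nonempty)
    {x : ι → ℝ} (hx : ∀ i ∈ S, 0 < x i) (y : ι → ℝ) :
    ∃ t : ℝ, (∀ i ∈ S, y i ≤ t * x i) ∧ ∃ i ∈ S, y i = t * x i := by
  obtain ⟨i, hi, hmax⟩ := Set.exists_max_image S (fun i => y i / x i) hS hne
  exact ⟨y i / x i, fun j hj => (div_le_iff₀ (hx j hj)).1 (hmax j hj), i, hi,
    (div_mul_cancel₀ _ (hx i hi).ne').symm⟩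

section Reachability

open Matrix

variable [DecidableEq V] {B : Matrix V V ℝ} {C F : Set V} {ψ : V → ℝ} {u v w : V}

lemma Reaches.refl (B : Matrix V V ℝ) (v : V) : Reaches B v v :=
  ⟨0, by simp only [pow_zero, one_apply_eq, zero_lt_one]⟩

lemma Reaches.of_pos (h : 0 < B v w) : Reaches B v w :=
  ⟨1, by rwa [pow_one]⟩

lemma Reaches.trans (hB : ∀ v w, 0 ≤ B v w) (huv : Reaches B u v) (hvw : Reaches B v w) :
    Reaches B u w := by
  obtain ⟨k, hk⟩ := huv
  obtain ⟨l, hl⟩ := hvw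
  refine ⟨k + l, (mul_pos hk hl).trans_le ?_⟩
  rw [pow_add]
  exact apply_mul_le_mulVec (pow_apply_nonneg hB k) (fun x => pow_apply_nonneg hB l x w) u v

lemma pos_of_reaches (hB : ∀ v w, 0 ≤ B v w) (hψ : 0 ≤ ψ) (hBψ : B *ᵥ ψ ≤ ψ)
    (hvw : Reaches B v w) (hw : 0 < ψ w) : 0 < ψ v := by
  obtain ⟨k, hk⟩ := hvw
  calc 0 < (B ^ k) v w * ψ w := mul_pos hk hw
    _ ≤ ((B ^ k) *ᵥ ψ) v := apply_mul_le_mulVec (pow_apply_nonneg hB k) hψ v w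
    _ ≤ ψ v := by
      simpa only [one_pow, one_smul] using
        pow_mulVec_le_smul hB zero_le_one (by rwa [one_smul]) k v

lemma apply_mul_eq_zero_of_reaches_imp (hB : ∀ v w, 0 ≤ B v w) (h : Reaches B v w → ψ w = 0) :
    B v w * ψ w = 0 := by
  rcases (hB v w).eq_or_lt with hvw | hvw
  · rw [← hvw, zero_mul]
  · rw [h (.of_pos hvw), mul_zero]

lemma mulVec_indicator_apply_of_reaches_imp (hB : ∀ v w, 0 ≤ B v w)
    (h : ∀ w, Reaches B v w → ψ w ≠ 0 → w ∈ C) : (B *ᵥ C.indicator ψ) v = (B *ᵥ ψ) v := by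
  refine sum_congr rfl fun w _ => ?_
  by_cases hw : w ∈ C
  · rw [Set.indicator_of_mem hw]
  · rw [Set.indicator_of_notMem hw, mul_zero]
    exact (apply_mul_eq_zero_of_reaches_imp hB fun hvw => not_imp_comm.1 (h w hvw) hw).symm

lemma subset_closureSet (B : Matrix V V ℝ) (F : Set V) : F ⊆ closureSet B F :=
  fun v hv => ⟨v, hv, Reaches.refl B v⟩

lemma mem_closureSet_of_reaches (hB : ∀ v w, 0 ≤ B v w) (hvw : Reaches B v w)
    (hw : w ∈ closureSet B F) : v ∈ closureSet B F := by
  obtain ⟨u, hu, hwu⟩ := hw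
  exact ⟨u, hu, hvw.trans hB hwu⟩

lemma mulVec_eq_zero_of_notMem_closureSet (hB : ∀ v w, 0 ≤ B v w)
    (hψ : ∀ v ∉ closureSet B F, ψ v = 0) (hv : v ∉ closureSet B F) : (B *ᵥ ψ) v = 0 := by
  exact sum_eq_zero fun w _ => apply_mul_eq_zero_of_reaches_imp hB fun hvw =>
    hψ w fun hw => hv (mem_closureSet_of_reaches hB hvw hw)

lemma specRad_restrictMatrix_lt_one {S : Set V} (hB : ∀ v w, 0 ≤ B v w) (hψ : 0 ≤ ψ)
    (hBψ : B *ᵥ ψ ≤ ψ) (hpos : ∀ v ∈ S, 0 < ψ v)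
    (hexit : ∀ v ∈ S, ∃ w ∉ S, Reaches B v w ∧ 0 < ψ w) : specRad (restrictMatrix B S) < 1 := by
  -- A Perron vector `u` of `B^S` for the eigenvalue `1` would lie below some `t • ψ` and touch it
  -- at some `v₁ ∈ S`. Then `t • ψ - u` is superharmonic and vanishes at `v₁`, yet `v₁` reaches a
  -- vertex where it is positive.
  refine (specRad_restrictMatrix_le_one hB hψ hBψ hpos).lt_of_ne fun hρ => ?_
  obtain ⟨u, hu, hBu⟩ := exists_mem_stdSimplex_indicator_mulVec_eq hB hρ
  have hu_off (v : V) (hv : v ∉ S) : u v = 0 := by rw [← hBu, Set.indicator_of_notMem hv]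
  obtain ⟨v₀, hv₀⟩ : ∃ v, 0 < u v := by
    by_contra! hle
    exact zero_ne_one ((sum_eq_zero fun v _ => (hle v).antisymm (hu.1 v)).symm.trans hu.2)
  have hv₀S : v₀ ∈ S := by_contra fun h => hv₀.ne' (hu_off v₀ h)
  obtain ⟨t, hle, v₁, hv₁, heq⟩ := exists_le_mul_and_eq_mul S.toFinite ⟨v₀, hv₀S⟩ hpos u
  have ht : 0 < t := pos_of_mul_pos_left (hv₀.trans_le (hle v₀ hv₀S)) (hψ v₀)
  have hχ : 0 ≤ t • ψ - u := fun v => sub_nonneg.2 <| by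
    by_cases hv : v ∈ S
    · exact hle v hv
    · rw [hu_off v hv]
      exact mul_nonneg ht.le (hψ v)
  have hBχ : B *ᵥ (t • ψ - u) ≤ t • ψ - u := by
    have huB : u ≤ B *ᵥ u := hBu.symm.le.trans
      (Set.indicator_le_self' fun v _ => mulVec_nonneg_of_nonneg hB hu.1 v)
    rw [mulVec_sub, mulVec_smul]
    exact sub_le_sub (smul_le_smul_of_nonneg_left hBψ ht.le) huB
  obtain ⟨w, hwS, hv₁w, hw⟩ := hexit v₁ hv₁
  have hχw : 0 < (t • ψ - u) w := by
    rw [Pi.sub_apply, hu_off w hwS, sub_zero]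
    exact mul_pos ht hw
  exact (pos_of_reaches hB hχ hBχ hv₁w hχw).ne' (sub_eq_zero.2 heq.symm)

namespace IsComponent

lemma reaches (hB : ∀ v w, 0 ≤ B v w) (hC : IsComponent B C) (hv : v ∈ C) (hw : w ∈ C) :
    Reaches B v w := by
  obtain ⟨⟨u, rfl⟩, -⟩ := hC
  exact hv.2.trans hB hw.1

lemma mem_of_reaches (hB : ∀ v w, 0 ≤ B v w) (hC : IsComponent B C) (hv : v ∈ C)
    (hvw : Reaches B v w) (hw : w ∈ closureSet B C) : w ∈ C := by
  obtain ⟨x, hx, hwx⟩ := hw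
  obtain ⟨⟨u, rfl⟩, -⟩ := hC
  exact ⟨hv.1.trans hB hvw, hwx.trans hB hx.2⟩

lemma nonempty (hC : IsComponent B C) : C.Nonempty :=
  let ⟨v, hv, _⟩ := hC.2
  ⟨v, hv⟩

end IsComponent

end Reachability

lemma eventually_smul_le {ι : Type*} [Finite ι] {x y : ι → ℝ} (hy : 0 ≤ y)
    (hsupp : ∀ i, x i ≠ 0 → 0 < y i) : ∀ᶠ ε : ℝ in 𝓝 0, ε • x ≤ y := by
  refine eventually_all.2 fun i => ?_
  by_cases hi : x i = 0
  · exact .of_forall fun ε => by simpa [hi] using hy i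
  · have hlim : Tendsto (fun ε : ℝ => ε * x i) (𝓝 0) (𝓝 0) := by
      simpa only [zero_mul] using (continuous_mul_const (x i)).tendsto 0
    exact hlim.eventually_le_const (hsupp i hi)

section NormalizedHarmonic

open Matrix

variable {B : Matrix V V ℝ} {C : Set V} {φ ψ : V → ℝ} {v : V}

/-- The set of normalized `B`-harmonic vectors. -/
def normalizedHarmonic (B : Matrix V V ℝ) : Set (V → ℝ) :=
  {ψ | (∀ v, 0 ≤ ψ v) ∧ (∑ v, ψ v = 1) ∧ IsHarmonic B ψ}

lemma mem_normalizedHarmonic_iff :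
    ψ ∈ normalizedHarmonic B ↔ ψ ∈ stdSimplex ℝ V ∧ B *ᵥ ψ = ψ := by
  rw [funext_iff]
  exact and_assoc.symm

lemma convex_normalizedHarmonic (B : Matrix V V ℝ) : Convex ℝ (normalizedHarmonic B) := by
  have heq : normalizedHarmonic B =
      stdSimplex ℝ V ∩ (LinearMap.eqLocus B.mulVecLin LinearMap.id : Submodule ℝ (V → ℝ)) :=
    Set.ext fun _ => mem_normalizedHarmonic_iff
  rw [heq]
  exact (convex_stdSimplex ℝ V).inter (Submodule.convex _)

lemma inv_sum_smul_mem_normalizedHarmonic (hψ : 0 ≤ ψ) (hne : ψ ≠ 0) (hBψ : B *ᵥ ψ = ψ) :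
    (∑ v, ψ v)⁻¹ • ψ ∈ normalizedHarmonic B :=
  mem_normalizedHarmonic_iff.2
    ⟨inv_sum_smul_mem_stdSimplex hψ hne, by rw [mulVec_smul, hBψ]⟩

lemma ne_zero_of_mem_normalizedHarmonic (hψ : ψ ∈ normalizedHarmonic B) : ψ ≠ 0 := by
  rintro rfl
  simpa using hψ.2.1

lemma eq_of_mem_extremePoints_normalizedHarmonic (hψ : ψ ∈ (normalizedHarmonic B).extremePoints ℝ)
    (hφ : φ ∈ normalizedHarmonic B) (hsupp : ∀ v, φ v ≠ 0 → 0 < ψ v) : φ = ψ := by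
  obtain ⟨⟨hψ0, hψ1⟩, hBψ⟩ := mem_normalizedHarmonic_iff.1 hψ.1
  have hBφ := (mem_normalizedHarmonic_iff.1 hφ).2
  have hsmall : ∀ᶠ ε : ℝ in 𝓝[>] 0, ε • φ ≤ ψ :=
    (eventually_smul_le hψ0 hsupp).filter_mono nhdsWithin_le_nhds
  obtain ⟨ε, hle, hε0, hε1⟩ := (hsmall.and (Ioo_mem_nhdsGT zero_lt_one)).exists
  have hε : 0 < 1 - ε := sub_pos.2 hε1
  have hχ : (1 - ε)⁻¹ • (ψ - ε • φ) ∈ normalizedHarmonic B := by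
    refine mem_normalizedHarmonic_iff.2
      ⟨⟨smul_nonneg (inv_nonneg.2 hε.le) (sub_nonneg.2 hle), ?_⟩, ?_⟩
    · simp only [Pi.smul_apply, Pi.sub_apply, smul_eq_mul, ← mul_sum, sum_sub_distrib, hψ1, hφ.2.1,
        mul_one, inv_mul_cancel₀ hε.ne']
    · rw [mulVec_smul, mulVec_sub, mulVec_smul, hBψ, hBφ]
  refine hψ.2 hφ hχ ⟨ε, 1 - ε, hε0, hε, add_sub_cancel _ _, ?_⟩
  rw [smul_inv_smul₀ hε.ne', add_sub_cancel]

variable [DecidableEq V]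

namespace IsHarmonicComponent

lemma specRad_eq_one (hC : IsHarmonicComponent B C) : specRad (restrictMatrix B C) = 1 := by
  rw [← specRadOn_eq, hC.2.1]

lemma specRad_diff_lt_one (hC : IsHarmonicComponent B C) :
    specRad (restrictMatrix B (closureSet B C \ C)) < 1 := by
  rcases (closureSet B C \ C).eq_empty_or_nonempty with hempty | hne
  · rw [hempty, restrictMatrix, Set.indicator_empty]
    exact specRad_zero.trans_lt one_pos
  · rw [← specRadOn_eq]
    exact hC.2.2 hne

lemma nonneg_of_mulVec_le (hB : ∀ v w, 0 ≤ B v w) (hC : IsHarmonicComponent B C)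
    (hψ : B *ᵥ ψ ≤ ψ) (hψC : ∀ v ∈ C, 0 ≤ ψ v) (hoff : ∀ v ∉ closureSet B C, ψ v = 0) : 0 ≤ ψ :=
  nonneg_of_mulVec_le_on hB hC.specRad_diff_lt_one (fun v _ => hψ v) fun v hv => by
    by_cases hvC : v ∈ C
    · exact hψC v hvC
    · exact (hoff v fun h => hv ⟨h, hvC⟩).ge

lemma eq_zero_of_apply_eq_zero (hB : ∀ v w, 0 ≤ B v w) (hC : IsHarmonicComponent B C)
    (hψ : 0 ≤ ψ) (hBψ : B *ᵥ ψ = ψ) (hoff : ∀ v ∉ closureSet B C, ψ v = 0) (hv : v ∈ C)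
    (hψv : ψ v = 0) : ψ = 0 := by
  have hψC (w : V) (hw : w ∈ C) : ψ w = 0 := by
    by_contra hne
    exact (pos_of_reaches hB hψ hBψ.le (hC.1.reaches hB hv hw) ((hψ w).lt_of_ne' hne)).ne' hψv
  have hneg : 0 ≤ -ψ := hC.nonneg_of_mulVec_le hB (by rw [mulVec_neg, hBψ])
    (fun w hw => (neg_eq_zero.2 (hψC w hw)).ge) fun w hw => neg_eq_zero.2 (hoff w hw)
  exact (neg_nonneg.1 hneg).antisymm hψ

lemma pos_of_mem_closureSet (hB : ∀ v w, 0 ≤ B v w) (hC : IsHarmonicComponent B C)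
    (hψ : ψ ∈ normalizedHarmonic B) (hoff : ∀ v ∉ closureSet B C, ψ v = 0)
    (hv : v ∈ closureSet B C) : 0 < ψ v := by
  obtain ⟨⟨hψ0, -⟩, hBψ⟩ := mem_normalizedHarmonic_iff.1 hψ
  obtain ⟨w, hw, hvw⟩ := hv
  refine pos_of_reaches hB hψ0 hBψ.le hvw ((hψ0 w).lt_of_ne' fun hψw => ?_)
  exact ne_zero_of_mem_normalizedHarmonic hψ
    (hC.eq_zero_of_apply_eq_zero hB hψ0 hBψ hoff hw hψw)

lemma eq_of_mem_normalizedHarmonic (hB : ∀ v w, 0 ≤ B v w) (hC : IsHarmonicComponent B C)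
    (hφ : φ ∈ normalizedHarmonic B) (hψ : ψ ∈ normalizedHarmonic B)
    (hφoff : ∀ v ∉ closureSet B C, φ v = 0) (hψoff : ∀ v ∉ closureSet B C, ψ v = 0) : φ = ψ := by
  obtain ⟨t, hle, v, hv, heq⟩ := exists_le_mul_and_eq_mul C.toFinite hC.1.nonempty
    (fun v hv => hC.pos_of_mem_closureSet hB hψ hψoff (subset_closureSet B C hv)) φ
  have hBχ : B *ᵥ (t • ψ - φ) = t • ψ - φ := by
    rw [mulVec_sub, mulVec_smul, (mem_normalizedHarmonic_iff.1 hφ).2,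
      (mem_normalizedHarmonic_iff.1 hψ).2]
  have hoff (v : V) (hv : v ∉ closureSet B C) : (t • ψ - φ) v = 0 := by
    rw [Pi.sub_apply, Pi.smul_apply, hφoff v hv, hψoff v hv, smul_zero, sub_zero]
  have hχ : 0 ≤ t • ψ - φ :=
    hC.nonneg_of_mulVec_le hB hBχ.le (fun v hv => sub_nonneg.2 (hle v hv)) hoff
  have hzero : t • ψ - φ = 0 :=
    hC.eq_zero_of_apply_eq_zero hB hχ hBχ hoff hv (sub_eq_zero.2 heq.symm)
  have hφt : φ = t • ψ := (sub_eq_zero.1 hzero).symm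
  have ht : t = 1 := by
    simpa only [hφt, Pi.smul_apply, smul_eq_mul, ← mul_sum, hψ.2.1, mul_one] using hφ.2.1
  rw [hφt, ht, one_smul]

lemma exists_mem_normalizedHarmonic (hB : ∀ v w, 0 ≤ B v w) (hC : IsHarmonicComponent B C) :
    ∃ φ ∈ normalizedHarmonic B, ∀ v ∉ closureSet B C, φ v = 0 := by
  obtain ⟨x, hx, hxC⟩ := exists_mem_stdSimplex_indicator_mulVec_eq hB hC.specRad_eq_one
  obtain ⟨f, hf, hfx, hfharm⟩ := exists_harmonic_extension hB hC.specRad_diff_lt_one hx.1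
  have hxoff (v : V) (hv : v ∉ C) : x v = 0 := by rw [← hxC, Set.indicator_of_notMem hv]
  have hfC : C.indicator f = x := funext fun v => by
    by_cases hv : v ∈ C
    · rw [Set.indicator_of_mem hv, hfx v fun h => h.2 hv]
    · rw [Set.indicator_of_notMem hv, hxoff v hv]
  have hfoff (v : V) (hv : v ∉ closureSet B C) : f v = 0 := by
    rw [hfx v fun h => hv h.1, hxoff v fun h => hv (subset_closureSet B C h)]
  have hBf : B *ᵥ f = f := funext fun v => by
    by_cases hvC : v ∈ C
    · calc (B *ᵥ f) v = (B *ᵥ C.indicator f) v :=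
            (mulVec_indicator_apply_of_reaches_imp hB fun w hvw hw =>
              hC.1.mem_of_reaches hB hvC hvw (not_imp_comm.1 (hfoff w) hw)).symm
        _ = C.indicator (B *ᵥ x) v := by rw [hfC, Set.indicator_of_mem hvC]
        _ = C.indicator f v := by rw [hxC, hfC]
        _ = f v := Set.indicator_of_mem hvC f
    by_cases hv : v ∈ closureSet B C
    · exact hfharm v ⟨hv, hvC⟩
    · rw [hfoff v hv, mulVec_eq_zero_of_notMem_closureSet hB hfoff hv]
  have hne : f ≠ 0 := by
    rintro rfl
    simpa [← hfC] using hx.2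
  exact ⟨_, inv_sum_smul_mem_normalizedHarmonic hf hne hBf, fun v hv => by
    rw [Pi.smul_apply, hfoff v hv, smul_zero]⟩

lemma isPhiC (hB : ∀ v w, 0 ≤ B v w) (hC : IsHarmonicComponent B C)
    (hφ : φ ∈ normalizedHarmonic B) (hoff : ∀ v ∉ closureSet B C, φ v = 0) : IsPhiC B C φ := by
  refine ⟨hφ.1, hφ.2.1, hφ.2.2, fun v hv => ?_, fun v =>
    ⟨not_imp_comm.1 (hoff v), fun hv => (hC.pos_of_mem_closureSet hB hφ hoff hv).ne'⟩⟩
  rw [← hφ.2.2 v]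
  refine sum_congr rfl fun w _ => Set.indicator_apply_eq_self.2 fun hw => ?_
  exact apply_mul_eq_zero_of_reaches_imp hB fun hvw =>
    hoff w fun hw' => hw (hC.1.mem_of_reaches hB hv hvw hw')

lemma isPhiC_phiComp (hB : ∀ v w, 0 ≤ B v w) (hC : IsHarmonicComponent B C) :
    IsPhiC B C (phiComp B C) := by
  obtain ⟨φ, hφ, hoff⟩ := hC.exists_mem_normalizedHarmonic hB
  have hex : ∃ φ, IsPhiC B C φ := ⟨φ, hC.isPhiC hB hφ hoff⟩
  rw [phiComp, dif_pos hex]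
  exact hex.choose_spec

lemma phiComp_mem_normalizedHarmonic (hB : ∀ v w, 0 ≤ B v w) (hC : IsHarmonicComponent B C) :
    phiComp B C ∈ normalizedHarmonic B :=
  let ⟨hnonneg, hsum, hharm, _⟩ := hC.isPhiC_phiComp hB
  ⟨hnonneg, hsum, hharm⟩

lemma phiComp_apply_ne_zero_iff (hB : ∀ v w, 0 ≤ B v w) (hC : IsHarmonicComponent B C) :
    phiComp B C v ≠ 0 ↔ v ∈ closureSet B C :=
  (hC.isPhiC_phiComp hB).2.2.2.2 v

end IsHarmonicComponent

end NormalizedHarmonic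

section ExtremePoints

open Matrix

variable [DecidableEq V] {B : Matrix V V ℝ} {C : Set V} {ψ : V → ℝ}

lemma exists_isComponent_of_mulVec_eq (hB : ∀ v w, 0 ≤ B v w) (hψ : 0 ≤ ψ) (hne : ψ ≠ 0)
    (hBψ : B *ᵥ ψ = ψ) :
    ∃ C, IsComponent B C ∧ (∀ v ∈ C, 0 < ψ v) ∧
      ∀ v ∈ C, ∀ w, Reaches B v w → 0 < ψ w → w ∈ C := by
  obtain ⟨u, hu⟩ := (Pi.lt_def.1 (hψ.lt_of_ne' hne)).2
  obtain ⟨v, hv, hmin⟩ := (Set.toFinite {v | 0 < ψ v}).exists_minimalFor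
    (fun v => {w | Reaches B v w}) _ ⟨u, hu⟩
  have hback (w : V) (hvw : Reaches B v w) (hw : 0 < ψ w) : Reaches B w v :=
    hmin hw (fun _ hwx => hvw.trans hB hwx) (Reaches.refl B v)
  obtain ⟨w, hw⟩ : ∃ w, 0 < B v w * ψ w := by
    by_contra! hle
    exact (hv.trans_eq (congrFun hBψ v).symm).not_ge (sum_nonpos fun w _ => hle w)
  have hvw : 0 < B v w := pos_of_mul_pos_left hw (hψ w)
  have hwv : Reaches B w v := hback w (.of_pos hvw) (pos_of_mul_pos_right hw (hB v w))
  refine ⟨{w | Reaches B v w ∧ Reaches B w v},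
    ⟨⟨v, rfl⟩, v, ⟨.refl B v, .refl B v⟩, w, ⟨.of_pos hvw, hwv⟩, hvw.ne'⟩,
    fun x hx => pos_of_reaches hB hψ hBψ.le hx.2 hv, fun x hx y hxy hy => ?_⟩
  have hvy : Reaches B v y := hx.1.trans hB hxy
  exact ⟨hvy, hback y hvy hy⟩

lemma one_le_specRad_restrictMatrix (hB : ∀ v w, 0 ≤ B v w) (hψ : 0 ≤ ψ) (hBψ : B *ᵥ ψ = ψ)
    (hCne : ∃ v ∈ C, 0 < ψ v) (hterm : ∀ v ∈ C, ∀ w, Reaches B v w → 0 < ψ w → w ∈ C) :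
    1 ≤ specRad (restrictMatrix B C) := by
  obtain ⟨v, hv, hψv⟩ := hCne
  refine le_specRad_of_le_mulVec (x := C.indicator ψ) (i := v) (restrictMatrix_nonneg hB C) ?_
    (by rwa [Set.indicator_of_mem hv])
  rw [one_smul, restrictMatrix_mulVec, Set.indicator_indicator, Set.inter_self]
  refine fun v => Set.indicator_rel_indicator le_rfl fun hv => ?_
  rw [mulVec_indicator_apply_of_reaches_imp hB fun w hvw hw =>
    hterm v hv w hvw ((hψ w).lt_of_ne' hw), hBψ]

lemma exists_isHarmonicComponent (hB : ∀ v w, 0 ≤ B v w) (hψ : ψ ∈ normalizedHarmonic B) :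
    ∃ C, IsHarmonicComponent B C ∧ ∀ v ∈ closureSet B C, 0 < ψ v := by
  obtain ⟨⟨hψ0, -⟩, hBψ⟩ := mem_normalizedHarmonic_iff.1 hψ
  obtain ⟨C, hC, hpos, hterm⟩ := exists_isComponent_of_mulVec_eq hB hψ0
    (ne_zero_of_mem_normalizedHarmonic hψ) hBψ
  have hpos' (v : V) (hv : v ∈ closureSet B C) : 0 < ψ v := by
    obtain ⟨w, hw, hvw⟩ := hv
    exact pos_of_reaches hB hψ0 hBψ.le hvw (hpos w hw)
  have hone : specRad (restrictMatrix B C) = 1 :=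
    (specRad_restrictMatrix_le_one hB hψ0 hBψ.le hpos).antisymm <|
      one_le_specRad_restrictMatrix hB hψ0 hBψ (hC.nonempty.imp fun v hv => ⟨hv, hpos v hv⟩) hterm
  have hlt : specRad (restrictMatrix B (closureSet B C \ C)) < 1 :=
    specRad_restrictMatrix_lt_one hB hψ0 hBψ.le (fun v hv => hpos' v hv.1) fun v hv =>
      let ⟨w, hw, hvw⟩ := hv.1
      ⟨w, fun h => h.2 hw, hvw, hpos w hw⟩
  exact ⟨C, ⟨hC, by rwa [specRadOn_eq], fun _ => by rwa [specRadOn_eq]⟩, hpos'⟩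

lemma IsHarmonicComponent.phiComp_mem_extremePoints (hB : ∀ v w, 0 ≤ B v w)
    (hC : IsHarmonicComponent B C) : phiComp B C ∈ (normalizedHarmonic B).extremePoints ℝ := by
  have hφ := hC.phiComp_mem_normalizedHarmonic hB
  have hoff (v : V) (hv : v ∉ closureSet B C) : phiComp B C v = 0 :=
    not_not.1 fun h => hv ((hC.phiComp_apply_ne_zero_iff hB).1 h)
  refine ⟨hφ, fun x hx y hy ⟨a, b, ha, hb, _, hxy⟩ => ?_⟩
  refine hC.eq_of_mem_normalizedHarmonic hB hx hφ (fun v hv => ?_) hoff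
  have hsum : a * x v + b * y v = 0 := (congrFun hxy v).trans (hoff v hv)
  have hax : a * x v = 0 := ((add_eq_zero_iff_of_nonneg (mul_nonneg ha.le (hx.1 v))
    (mul_nonneg hb.le (hy.1 v))).1 hsum).1
  exact (mul_eq_zero.1 hax).resolve_left ha.ne'

end ExtremePoints

/-- The normalized `B`-harmonic vectors form a convex set whose extreme points are exactly
the vectors `φ^C` for `C` a `B`-harmonic component. -/
theorem harmonic_simplex {V : Type*} [Fintype V] [Nonempty V] [DecidableEq V]
    (B : Matrix V V ℝ) (hB : ∀ v w, 0 ≤ B v w) :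
    Convex ℝ {ψ : V → ℝ | (∀ v, 0 ≤ ψ v) ∧ (∑ v, ψ v = 1) ∧ IsHarmonic B ψ} ∧
    Set.extremePoints ℝ {ψ : V → ℝ | (∀ v, 0 ≤ ψ v) ∧ (∑ v, ψ v = 1) ∧ IsHarmonic B ψ}
      = {φ : V → ℝ | ∃ C : Set V, IsHarmonicComponent B C ∧ φ = phiComp B C} := by
  refine ⟨convex_normalizedHarmonic B, Set.Subset.antisymm (fun ψ hψ => ?_) ?_⟩
  · obtain ⟨C, hC, hpos⟩ := exists_isHarmonicComponent hB (extremePoints_subset hψ)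
    have heq : phiComp B C = ψ :=
      eq_of_mem_extremePoints_normalizedHarmonic hψ (hC.phiComp_mem_normalizedHarmonic hB)
        fun v hv => hpos v ((hC.phiComp_apply_ne_zero_iff hB).1 hv)
    exact ⟨C, hC, heq.symm⟩
  · rintro _ ⟨C, hC, rfl⟩
    exact hC.phiComp_mem_extremePoints hB
end

section
/- For every component C of G, the function ℝ ∋ β ↦ ρ(A(β)^C) is strictly positive, continuous, and log-convex: for all β, β' ∈ ℝ and all t ∈ [0,1], ρ(A(tβ + (1−t)β')^C) ≤ ρ(A(β)^C)^t · ρ(A(β')^C)^{1−t}. -/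
open Filter Finset

variable {V E : Type*}

/-- Consecutive edges of the list match up: `r(eᵢ) = s(eᵢ₊₁)`. -/
def ChainOK (src rng : E → V) (μ : List E) : Prop :=
  List.Chain' (fun e f => rng e = src f) μ

/-- A loop: a nonempty path `μ = e₁⋯eₙ` with `s(e₁) = r(eₙ)`. -/
def IsLoop (src rng : E → V) (μ : List E) : Prop :=
  ∃ h : μ ≠ [], ChainOK src rng μ ∧ src (μ.head h) = rng (μ.getLast h)

/-- A loop lying in the vertex set `C`. -/
def LoopIn (src rng : E → V) (C : Set V) (μ : List E) : Prop :=
  IsLoop src rng μ ∧ ∀ e ∈ μ, src e ∈ C ∧ rng e ∈ C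

/-- `v ⤳ w`: there is a (possibly length-0) path from `v` to `w`. -/
def GReaches (src rng : E → V) (v w : V) : Prop :=
  v = w ∨ ∃ μ : List E, ∃ h : μ ≠ [],
    ChainOK src rng μ ∧ src (μ.head h) = v ∧ rng (μ.getLast h) = w

/-- The closure of a set of vertices: all vertices that reach it. -/
def GClosure (src rng : E → V) (C : Set V) : Set V :=
  {v | ∃ w ∈ C, GReaches src rng v w}

/-- A component: an equivalence class of `v ∼ w` (mutual reachability) containing a loop. -/
def GIsComponent (src rng : E → V) (C : Set V) : Prop :=
  (∃ v, C = {w | GReaches src rng v w ∧ GReaches src rng w v}) ∧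
  ∃ μ : List E, LoopIn src rng C μ

/-- The property that the loop `μ` witnesses circularity of the component `C`: `μ` is a simple
loop visiting every vertex of `C`, and containing every edge of the graph joining vertices
of `C`. -/
def CircularWitness (src rng : E → V) (C : Set V) (μ : List E) : Prop :=
  LoopIn src rng C μ ∧ (μ.map src).Nodup ∧
  (∀ v ∈ C, v ∈ μ.map src) ∧
  (∀ e : E, src e ∈ C → rng e ∈ C → e ∈ μ)

/-- A circular component: a component containing, up to the choice of starting vertex,
exactly one loop. -/
def IsCircular (src rng : E → V) (C : Set V) : Prop :=
  GIsComponent src rng C ∧ ∃ μ : List E, CircularWitness src rng C μ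

/-- The matrix `A(β)` with entries `A(β)_{vw} = Σ_{e : v → w} e^{-β F(e)}`. -/
noncomputable def Amat [Fintype E] [DecidableEq V] (src rng : E → V) (F : E → ℝ) (β : ℝ) :
    Matrix V V ℝ :=
  fun v w => ∑ e ∈ Finset.univ.filter (fun e => src e = v ∧ rng e = w), Real.exp (-β * F e)

/-- `F` extended to paths: `F(e₁⋯eₙ) = F(e₁) + ⋯ + F(eₙ)`. -/
def Fpath (F : E → ℝ) (μ : List E) : ℝ := (μ.map F).sum

/-!
Log-convexity is Kingman's theorem: Hölder's inequality gives
`A(sβ + tβ')_{vw} ≤ A(β)_{vw}^s * A(β')_{vw}^t` for `s + t = 1`, and a second use of it shows that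
such an entrywise bound survives matrix multiplication, hence passes to all powers, to their norms
and to the `limsup` of the `k`-th roots. Positivity is the Collatz–Wielandt bound applied to the
indicator vector of the vertices of a loop. A positive function on `ℝ` with convex logarithm is
continuous, so continuity comes for free.
-/

section LogConvex

variable {ι : Type*} {l : Filter ι} {u v : ι → ℝ} {s t : ℝ}

lemma continuous_of_convexOn_log {W : Type*} [NormedAddCommGroup W] [NormedSpace ℝ W]
    [FiniteDimensional ℝ W] {f : W → ℝ} (hf : ∀ x, 0 < f x)
    (hlog : ConvexOn ℝ Set.univ fun x => Real.log (f x)) : Continuous f :=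
  (Real.continuous_exp.comp (continuousOn_univ.1 (hlog.continuousOn isOpen_univ))).congr
    fun x => Real.exp_log (hf x)

lemma convexOn_log_of_le_rpow_mul_rpow {W : Type*} [AddCommGroup W] [Module ℝ W] {f : W → ℝ}
    (hf : ∀ x, 0 < f x)
    (h : ∀ x y (s t : ℝ), 0 ≤ s → 0 ≤ t → s + t = 1 → f (s • x + t • y) ≤ f x ^ s * f y ^ t) :
    ConvexOn ℝ Set.univ fun x => Real.log (f x) := by
  refine ⟨convex_univ, fun x _ y _ s t hs ht hst => ?_⟩
  calc Real.log (f (s • x + t • y))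
      ≤ Real.log (f x ^ s * f y ^ t) := Real.log_le_log (hf _) (h x y s t hs ht hst)
    _ = s • Real.log (f x) + t • Real.log (f y) := by
      rw [Real.log_mul (Real.rpow_pos_of_pos (hf x) s).ne' (Real.rpow_pos_of_pos (hf y) t).ne',
        Real.log_rpow (hf x), Real.log_rpow (hf y), smul_eq_mul, smul_eq_mul]

lemma sum_rpow_mul_rpow_le (I : Finset ι) {f g : ι → ℝ} (hf : ∀ i ∈ I, 0 ≤ f i)
    (hg : ∀ i ∈ I, 0 ≤ g i) (hs : 0 ≤ s) (ht : 0 ≤ t) (hst : s + t = 1) :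
    ∑ i ∈ I, f i ^ s * g i ^ t ≤ (∑ i ∈ I, f i) ^ s * (∑ i ∈ I, g i) ^ t := by
  rcases hs.eq_or_lt with rfl | hs
  · obtain rfl : t = 1 := by linarith
    simp
  rcases ht.eq_or_lt with rfl | ht
  · obtain rfl : s = 1 := by linarith
    simp
  have hconj : s⁻¹.HolderConjugate t⁻¹ :=
    Real.holderConjugate_iff.2 ⟨(one_lt_inv₀ hs).2 (by linarith), by simpa using hst⟩
  have hf_root : ∑ i ∈ I, (f i ^ s) ^ s⁻¹ = ∑ i ∈ I, f i :=
    sum_congr rfl fun i hi => Real.rpow_rpow_inv (hf i hi) hs.ne'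
  have hg_root : ∑ i ∈ I, (g i ^ t) ^ t⁻¹ = ∑ i ∈ I, g i :=
    sum_congr rfl fun i hi => Real.rpow_rpow_inv (hg i hi) ht.ne'
  simpa only [one_div, inv_inv, hf_root, hg_root] using
    Real.inner_le_Lp_mul_Lq_of_nonneg I hconj (fun i hi => Real.rpow_nonneg (hf i hi) s)
      fun i hi => Real.rpow_nonneg (hg i hi) t

lemma isBoundedUnder_rpow (hu : 0 ≤ u) (hbdd : l.IsBoundedUnder (· ≤ ·) u) (hs : 0 ≤ s) :
    l.IsBoundedUnder (· ≤ ·) fun k => u k ^ s := by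
  obtain ⟨B, hB⟩ := hbdd
  exact ⟨B ^ s, eventually_map.2 <| (eventually_map.1 hB).mono fun k hk =>
    Real.rpow_le_rpow (hu k) hk hs⟩

lemma limsup_rpow [l.NeBot] (hu : 0 ≤ u) (hbdd : l.IsBoundedUnder (· ≤ ·) u) (hs : 0 ≤ s) :
    limsup (fun k => u k ^ s) l = limsup u l ^ s := by
  -- `x ↦ x ^ s` is monotone only on `[0, ∞)`, so it is precomposed with `max 0`.
  have hmono : Monotone fun x : ℝ => max 0 x ^ s := fun x y hxy =>
    Real.rpow_le_rpow (le_max_left 0 x) (max_le_max_left 0 hxy) hs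
  have hcont : Continuous fun x : ℝ => max 0 x ^ s :=
    (continuous_const.max continuous_id).rpow_const fun _ => Or.inr hs
  have hlim : 0 ≤ limsup u l := le_limsup_of_frequently_le (Frequently.of_forall hu) hbdd
  have hmap := hmono.map_limsup_of_continuousAt u hcont.continuousAt hbdd
    (IsCoboundedUnder.of_frequently_ge (Frequently.of_forall hu))
  have hmax (k : ι) : max 0 (u k) = u k := max_eq_right (hu k)
  simpa only [Function.comp_def, max_eq_right hlim, hmax] using hmap.symm

lemma limsup_rpow_mul_rpow_le [l.NeBot] (hu : 0 ≤ u) (hv : 0 ≤ v)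
    (hu_bdd : l.IsBoundedUnder (· ≤ ·) u) (hv_bdd : l.IsBoundedUnder (· ≤ ·) v)
    (hs : 0 ≤ s) (ht : 0 ≤ t) :
    limsup (fun k => u k ^ s * v k ^ t) l ≤ limsup u l ^ s * limsup v l ^ t := by
  rw [← limsup_rpow hu hu_bdd hs, ← limsup_rpow hv hv_bdd ht]
  exact limsup_mul_le (Frequently.of_forall fun k => Real.rpow_nonneg (hu k) s)
    (isBoundedUnder_rpow hu hu_bdd hs) (Eventually.of_forall fun k => Real.rpow_nonneg (hv k) t)
    (isBoundedUnder_rpow hv hv_bdd ht)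

end LogConvex

section SpectralRadius

open scoped Matrix

variable {n : Type*} [Fintype n] {M P Q A B A' B' : Matrix n n ℝ} {s t : ℝ}

/-- The entrywise `ℓ¹`-norm of a real matrix, the norm from which `specRad` is computed. -/
def l1Norm (M : Matrix n n ℝ) : ℝ := ∑ i, ∑ j, |M i j|

lemma l1Norm_nonneg (M : Matrix n n ℝ) : 0 ≤ l1Norm M :=
  sum_nonneg fun _ _ => sum_nonneg fun _ _ => abs_nonneg _

lemma sum_abs_row_le_l1Norm (M : Matrix n n ℝ) (i : n) : ∑ j, |M i j| ≤ l1Norm M :=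
  single_le_sum (f := fun i => ∑ j, |M i j|) (fun _ _ => sum_nonneg fun _ _ => abs_nonneg _)
    (mem_univ i)

lemma l1Norm_mul_le (M N : Matrix n n ℝ) : l1Norm (M * N) ≤ l1Norm M * l1Norm N := by
  have hrow (i : n) : ∑ j, |(M * N) i j| ≤ (∑ l, |M i l|) * l1Norm N :=
    calc ∑ j, |(M * N) i j|
        ≤ ∑ j, ∑ l, |M i l| * |N l j| := by
          gcongr with j
          simpa only [Matrix.mul_apply, abs_mul] using
            abs_sum_le_sum_abs (fun l => M i l * N l j) univ
      _ = ∑ l, |M i l| * ∑ j, |N l j| := by simp only [mul_sum]; exact sum_comm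
      _ ≤ ∑ l, |M i l| * l1Norm N := by gcongr with l; exact sum_abs_row_le_l1Norm N l
      _ = (∑ l, |M i l|) * l1Norm N := (sum_mul _ _ _).symm
  calc l1Norm (M * N) ≤ ∑ i, (∑ l, |M i l|) * l1Norm N := sum_le_sum fun i _ => hrow i
    _ = l1Norm M * l1Norm N := (sum_mul _ _ _).symm

lemma l1Norm_le_rpow_mul_rpow (hs : 0 ≤ s) (ht : 0 ≤ t) (hst : s + t = 1)
    (h : ∀ i j, |P i j| ≤ |A i j| ^ s * |B i j| ^ t) :
    l1Norm P ≤ l1Norm A ^ s * l1Norm B ^ t := by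
  simp only [l1Norm, ← Fintype.sum_prod_type']
  exact (sum_le_sum fun p _ => h p.1 p.2).trans <|
    sum_rpow_mul_rpow_le univ (fun _ _ => abs_nonneg _) (fun _ _ => abs_nonneg _) hs ht hst

lemma abs_mul_apply_le_rpow_mul_rpow (hA : ∀ i j, 0 ≤ A i j) (hB : ∀ i j, 0 ≤ B i j)
    (hA' : ∀ i j, 0 ≤ A' i j) (hB' : ∀ i j, 0 ≤ B' i j)
    (hs : 0 ≤ s) (ht : 0 ≤ t) (hst : s + t = 1) (hP : ∀ i j, |P i j| ≤ A i j ^ s * B i j ^ t)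
    (hQ : ∀ i j, |Q i j| ≤ A' i j ^ s * B' i j ^ t) (i j : n) :
    |(P * Q) i j| ≤ (A * A') i j ^ s * (B * B') i j ^ t := by
  simp only [Matrix.mul_apply]
  calc |∑ l, P i l * Q l j|
      ≤ ∑ l, |P i l| * |Q l j| := by
        simpa only [abs_mul] using abs_sum_le_sum_abs (fun l => P i l * Q l j) univ
    _ ≤ ∑ l, A i l ^ s * B i l ^ t * (A' l j ^ s * B' l j ^ t) := by
        gcongr with l
        · exact (abs_nonneg _).trans (hP i l)
        · exact hP i l
        · exact hQ l j
    _ = ∑ l, (A i l * A' l j) ^ s * (B i l * B' l j) ^ t := by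
        refine sum_congr rfl fun l _ => ?_
        rw [Real.mul_rpow (hA i l) (hA' l j), Real.mul_rpow (hB i l) (hB' l j), mul_mul_mul_comm]
    _ ≤ (∑ l, A i l * A' l j) ^ s * (∑ l, B i l * B' l j) ^ t :=
        sum_rpow_mul_rpow_le univ (fun l _ => mul_nonneg (hA i l) (hA' l j))
          (fun l _ => mul_nonneg (hB i l) (hB' l j)) hs ht hst

variable [DecidableEq n]

lemma l1Norm_pow_le (M : Matrix n n ℝ) {k : ℕ} (hk : k ≠ 0) : l1Norm (M ^ k) ≤ l1Norm M ^ k := by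
  induction k, Nat.one_le_iff_ne_zero.2 hk using Nat.le_induction with
  | base => simp only [pow_one, le_refl]
  | succ k hk1 ih =>
    calc l1Norm (M ^ (k + 1)) ≤ l1Norm (M ^ k) * l1Norm M := by
          rw [pow_succ]; exact l1Norm_mul_le _ _
      _ ≤ l1Norm M ^ k * l1Norm M :=
          mul_le_mul_of_nonneg_right (ih (Nat.one_le_iff_ne_zero.1 hk1)) (l1Norm_nonneg M)
      _ = l1Norm M ^ (k + 1) := (pow_succ _ _).symm

lemma abs_pow_apply_le_rpow_mul_rpow (hA : ∀ i j, 0 ≤ A i j) (hB : ∀ i j, 0 ≤ B i j)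
    (hs : 0 ≤ s) (ht : 0 ≤ t) (hst : s + t = 1)
    (h : ∀ i j, |P i j| ≤ A i j ^ s * B i j ^ t) (k : ℕ) :
    ∀ i j, |(P ^ k) i j| ≤ (A ^ k) i j ^ s * (B ^ k) i j ^ t := by
  induction k with
  | zero =>
    intro i j
    by_cases hij : i = j
    · simp [hij]
    · simp only [pow_zero, Matrix.one_apply_ne hij, abs_zero]
      positivity
  | succ k ih =>
    simp only [pow_succ]
    exact abs_mul_apply_le_rpow_mul_rpow (Matrix.pow_apply_nonneg hA k)
      (Matrix.pow_apply_nonneg hB k) hA hB hs ht hst ih h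

/-- The sequence `‖Mᵏ‖^{1/k}` of Gelfand's formula, in the entrywise `ℓ¹`-norm; its value at
`k = 0` is `1`. -/
noncomputable def gelfandSeq (M : Matrix n n ℝ) (k : ℕ) : ℝ := l1Norm (M ^ k) ^ ((1 : ℝ) / k)

lemma specRad_eq_limsup_gelfandSeq (M : Matrix n n ℝ) :
    specRad M = limsup (gelfandSeq M) atTop := rfl

lemma gelfandSeq_nonneg (M : Matrix n n ℝ) : 0 ≤ gelfandSeq M :=
  fun _ => Real.rpow_nonneg (l1Norm_nonneg _) _

lemma gelfandSeq_le_l1Norm (M : Matrix n n ℝ) {k : ℕ} (hk : k ≠ 0) :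
    gelfandSeq M k ≤ l1Norm M :=
  calc gelfandSeq M k ≤ (l1Norm M ^ k) ^ ((1 : ℝ) / k) :=
        Real.rpow_le_rpow (l1Norm_nonneg _) (l1Norm_pow_le M hk) (by positivity)
    _ = l1Norm M := by rw [one_div, Real.pow_rpow_inv_natCast (l1Norm_nonneg M) hk]

lemma isBoundedUnder_gelfandSeq (M : Matrix n n ℝ) :
    atTop.IsBoundedUnder (· ≤ ·) (gelfandSeq M) :=
  ⟨l1Norm M, eventually_map.2 <| (eventually_ne_atTop 0).mono fun _ => gelfandSeq_le_l1Norm M⟩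

lemma gelfandSeq_le_rpow_mul_rpow (hA : ∀ i j, 0 ≤ A i j) (hB : ∀ i j, 0 ≤ B i j)
    (hs : 0 ≤ s) (ht : 0 ≤ t) (hst : s + t = 1)
    (h : ∀ i j, |P i j| ≤ A i j ^ s * B i j ^ t) (k : ℕ) :
    gelfandSeq P k ≤ gelfandSeq A k ^ s * gelfandSeq B k ^ t := by
  have hnorm : l1Norm (P ^ k) ≤ l1Norm (A ^ k) ^ s * l1Norm (B ^ k) ^ t := by
    refine l1Norm_le_rpow_mul_rpow hs ht hst fun i j => ?_
    rw [abs_of_nonneg (Matrix.pow_apply_nonneg hA k i j),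
      abs_of_nonneg (Matrix.pow_apply_nonneg hB k i j)]
    exact abs_pow_apply_le_rpow_mul_rpow hA hB hs ht hst h k i j
  have hnA := l1Norm_nonneg (A ^ k)
  have hnB := l1Norm_nonneg (B ^ k)
  calc gelfandSeq P k
      ≤ (l1Norm (A ^ k) ^ s * l1Norm (B ^ k) ^ t) ^ ((1 : ℝ) / k) :=
        Real.rpow_le_rpow (l1Norm_nonneg _) hnorm (by positivity)
    _ = gelfandSeq A k ^ s * gelfandSeq B k ^ t := by
        rw [Real.mul_rpow (Real.rpow_nonneg hnA s) (Real.rpow_nonneg hnB t),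
          ← Real.rpow_mul hnA, ← Real.rpow_mul hnB, mul_comm s, mul_comm t, Real.rpow_mul hnA,
          Real.rpow_mul hnB, gelfandSeq, gelfandSeq]

lemma specRad_le_rpow_mul_rpow (hA : ∀ i j, 0 ≤ A i j) (hB : ∀ i j, 0 ≤ B i j)
    (hs : 0 ≤ s) (ht : 0 ≤ t) (hst : s + t = 1)
    (h : ∀ i j, |P i j| ≤ A i j ^ s * B i j ^ t) :
    specRad P ≤ specRad A ^ s * specRad B ^ t := by
  simp only [specRad_eq_limsup_gelfandSeq]
  have hle := gelfandSeq_le_rpow_mul_rpow hA hB hs ht hst h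
  have hbdd : atTop.IsBoundedUnder (· ≤ ·) fun k => gelfandSeq A k ^ s * gelfandSeq B k ^ t :=
    isBoundedUnder_le_mul_of_nonneg
      (Frequently.of_forall fun k => Real.rpow_nonneg (gelfandSeq_nonneg A k) s)
      (isBoundedUnder_rpow (gelfandSeq_nonneg A) (isBoundedUnder_gelfandSeq A) hs)
      (Eventually.of_forall fun k => Real.rpow_nonneg (gelfandSeq_nonneg B k) t)
      (isBoundedUnder_rpow (gelfandSeq_nonneg B) (isBoundedUnder_gelfandSeq B) ht)
  have hcobdd : atTop.IsCoboundedUnder (· ≤ ·) (gelfandSeq P) :=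
    .of_frequently_ge (Frequently.of_forall (gelfandSeq_nonneg P))
  calc limsup (gelfandSeq P) atTop
      ≤ limsup (fun k => gelfandSeq A k ^ s * gelfandSeq B k ^ t) atTop :=
        limsup_le_limsup (Eventually.of_forall hle) hcobdd hbdd
    _ ≤ limsup (gelfandSeq A) atTop ^ s * limsup (gelfandSeq B) atTop ^ t :=
        limsup_rpow_mul_rpow_le (gelfandSeq_nonneg A) (gelfandSeq_nonneg B)
          (isBoundedUnder_gelfandSeq A) (isBoundedUnder_gelfandSeq B) hs ht

lemma pow_smul_le_pow_mulVec (hM : ∀ i j, 0 ≤ M i j) {x : n → ℝ} {c : ℝ} (hc : 0 ≤ c)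
    (h : c • x ≤ M *ᵥ x) (k : ℕ) : c ^ k • x ≤ (M ^ k) *ᵥ x := by
  induction k with
  | zero => simp only [pow_zero, one_smul, Matrix.one_mulVec, le_refl]
  | succ k ih =>
    calc c ^ (k + 1) • x = c ^ k • c • x := by rw [pow_succ, mul_smul]
      _ ≤ c ^ k • M *ᵥ x := smul_le_smul_of_nonneg_left h (pow_nonneg hc k)
      _ = M *ᵥ (c ^ k • x) := (Matrix.mulVec_smul M _ x).symm
      _ ≤ M *ᵥ (M ^ k) *ᵥ x := fun i => dotProduct_le_dotProduct_of_nonneg_left ih (hM i)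
      _ = (M ^ (k + 1)) *ᵥ x := by rw [Matrix.mulVec_mulVec, pow_succ']

-- Evaluating `cᵏ x ≤ Mᵏ x` at a largest entry of `x` bounds `cᵏ` by a row sum of `Mᵏ`.
lemma pow_le_l1Norm_pow_of_smul_le_mulVec (hM : ∀ i j, 0 ≤ M i j) {x : n → ℝ}
    (hx : ∃ i, 0 < x i) {c : ℝ} (hc : 0 ≤ c) (h : c • x ≤ M *ᵥ x) (k : ℕ) :
    c ^ k ≤ l1Norm (M ^ k) := by
  obtain ⟨i₀, hi₀⟩ := hx
  obtain ⟨i, -, hmax⟩ := exists_max_image univ x ⟨i₀, mem_univ i₀⟩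
  have hi : 0 < x i := hi₀.trans_le (hmax i₀ (mem_univ i₀))
  refine le_of_mul_le_mul_right ?_ hi
  calc c ^ k * x i ≤ ∑ j, (M ^ k) i j * x j := pow_smul_le_pow_mulVec hM hc h k i
    _ ≤ ∑ j, |(M ^ k) i j| * x i := sum_le_sum fun j hj =>
        (mul_le_mul_of_nonneg_left (hmax j hj) (Matrix.pow_apply_nonneg hM k i j)).trans
          (mul_le_mul_of_nonneg_right (le_abs_self _) hi.le)
    _ = (∑ j, |(M ^ k) i j|) * x i := (sum_mul _ _ _).symm
    _ ≤ l1Norm (M ^ k) * x i :=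
        mul_le_mul_of_nonneg_right (sum_abs_row_le_l1Norm (M ^ k) i) hi.le

lemma le_specRad_of_smul_le_mulVec (hM : ∀ i j, 0 ≤ M i j) {x : n → ℝ}
    (hx : ∃ i, 0 < x i) {c : ℝ} (hc : 0 ≤ c) (h : c • x ≤ M *ᵥ x) : c ≤ specRad M := by
  rw [specRad_eq_limsup_gelfandSeq]
  refine le_limsup_of_frequently_le (Eventually.frequently ?_) (isBoundedUnder_gelfandSeq M)
  filter_upwards [eventually_ne_atTop 0] with k hk
  calc c = (c ^ k) ^ ((1 : ℝ) / k) := by rw [one_div, Real.pow_rpow_inv_natCast hc hk]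
    _ ≤ gelfandSeq M k := Real.rpow_le_rpow (pow_nonneg hc k)
        (pow_le_l1Norm_pow_of_smul_le_mulVec hM hx hc h k) (by positivity)

lemma specRad_pos_of_forall_exists_pos (hM : ∀ i j, 0 ≤ M i j) {L : Finset n}
    (hL : L.Nonempty) (h : ∀ i ∈ L, ∃ j ∈ L, 0 < M i j) : 0 < specRad M := by
  let x : n → ℝ := fun i => if i ∈ L then 1 else 0
  have hMx (i : n) : (M *ᵥ x) i = ∑ j ∈ L, M i j := by
    simp only [x, Matrix.mulVec, dotProduct, mul_ite, mul_one, mul_zero, sum_ite_mem, univ_inter]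
  have hMx_pos : ∀ i ∈ L, 0 < (M *ᵥ x) i := fun i hi => by
    rw [hMx]
    exact sum_pos' (fun j _ => hM i j) (h i hi)
  obtain ⟨i₀, hi₀, hmin⟩ := exists_min_image L (M *ᵥ x) hL
  refine (hMx_pos i₀ hi₀).trans_le <|
    le_specRad_of_smul_le_mulVec (x := x) hM ⟨i₀, by simp [x, hi₀]⟩ (hMx_pos i₀ hi₀).le fun i => ?_
  by_cases hi : i ∈ L
  · simpa [x, hi] using hmin i hi
  · simpa [x, hi, hMx] using sum_nonneg fun j _ => hM i j

end SpectralRadius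

section Graph

lemma specRadOn_eq_specRad_submatrix [Fintype V] (B : Matrix V V ℝ) (S : Set V) [Fintype S]
    [DecidableEq S] :
    specRadOn B S = specRad (B.submatrix ((↑) : S → V) (↑)) := by
  rw [specRadOn, Subsingleton.elim (Set.toFinite S).fintype ‹Fintype S›,
    Subsingleton.elim (Classical.decEq S) ‹DecidableEq S›]
  rfl

lemma IsLoop.exists_mem_src_eq_rng {src rng : E → V} {μ : List E} (hμ : IsLoop src rng μ) {e : E}
    (he : e ∈ μ) : ∃ f ∈ μ, src f = rng e := by
  obtain ⟨hne, hchain, hclosed⟩ := hμ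
  obtain ⟨i, hi, rfl⟩ := List.getElem_of_mem he
  by_cases hi' : i + 1 < μ.length
  · exact ⟨μ[i + 1], List.getElem_mem hi', (List.isChain_iff_getElem.1 hchain i hi').symm⟩
  · obtain rfl : i = μ.length - 1 := by omega
    exact ⟨μ.head hne, List.head_mem hne, by rw [hclosed, List.getLast_eq_getElem]⟩

variable [DecidableEq V] [Fintype E] (src rng : E → V) (F : E → ℝ)

lemma Amat_nonneg (β : ℝ) (v w : V) : 0 ≤ Amat src rng F β v w :=
  sum_nonneg fun _ _ => (Real.exp_pos _).le

lemma Amat_src_rng_pos (β : ℝ) (e : E) : 0 < Amat src rng F β (src e) (rng e) :=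
  sum_pos (fun _ _ => Real.exp_pos _) ⟨e, mem_filter.2 ⟨mem_univ e, rfl, rfl⟩⟩

lemma Amat_le_rpow_mul_rpow (β β' : ℝ) {s t : ℝ} (hs : 0 ≤ s) (ht : 0 ≤ t) (hst : s + t = 1)
    (v w : V) :
    Amat src rng F (s * β + t * β') v w ≤ Amat src rng F β v w ^ s * Amat src rng F β' v w ^ t := by
  have hexp (e : E) : Real.exp (-(s * β + t * β') * F e) =
      Real.exp (-β * F e) ^ s * Real.exp (-β' * F e) ^ t := by
    rw [← Real.exp_mul, ← Real.exp_mul, ← Real.exp_add]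
    ring_nf
  simp only [Amat, hexp]
  exact sum_rpow_mul_rpow_le _ (fun _ _ => (Real.exp_pos _).le) (fun _ _ => (Real.exp_pos _).le)
    hs ht hst

variable [Fintype V]

lemma specRadOn_Amat_le_rpow_mul_rpow (C : Set V) (β β' : ℝ) {s t : ℝ} (hs : 0 ≤ s) (ht : 0 ≤ t)
    (hst : s + t = 1) :
    specRadOn (Amat src rng F (s * β + t * β')) C ≤
      specRadOn (Amat src rng F β) C ^ s * specRadOn (Amat src rng F β') C ^ t := by
  classical
  simp only [specRadOn_eq_specRad_submatrix]
  refine specRad_le_rpow_mul_rpow (fun _ _ => Amat_nonneg ..) (fun _ _ => Amat_nonneg ..) hs ht hst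
    fun v w => ?_
  simpa only [Matrix.submatrix_apply, abs_of_nonneg (Amat_nonneg ..)] using
    Amat_le_rpow_mul_rpow src rng F β β' hs ht hst v w

variable {src rng}

lemma LoopIn.specRadOn_Amat_pos {C : Set V} {μ : List E} (hμ : LoopIn src rng C μ) (β : ℝ) :
    0 < specRadOn (Amat src rng F β) C := by
  classical
  obtain ⟨hloop, hμC⟩ := hμ
  obtain ⟨e₀, he₀⟩ := List.exists_mem_of_ne_nil μ hloop.1
  rw [specRadOn_eq_specRad_submatrix]
  refine specRad_pos_of_forall_exists_pos (L := univ.filter fun v : C => ∃ e ∈ μ, src e = v)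
    (fun _ _ => Amat_nonneg ..)
    ⟨⟨src e₀, (hμC e₀ he₀).1⟩, mem_filter.2 ⟨mem_univ _, e₀, he₀, rfl⟩⟩ fun v hv => ?_
  obtain ⟨e, he, hev⟩ := (mem_filter.1 hv).2
  refine ⟨⟨rng e, (hμC e he).2⟩,
    mem_filter.2 ⟨mem_univ _, hloop.exists_mem_src_eq_rng he⟩, ?_⟩
  simpa only [Matrix.submatrix_apply, ← hev] using Amat_src_rng_pos src rng F β e

end Graph

theorem specRad_component_logConvex_general {V E : Type*} [Fintype V] [DecidableEq V] [Fintype E]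
    (src rng : E → V) (F : E → ℝ) (C : Set V) (hC : ∃ μ : List E, LoopIn src rng C μ) :
    (∀ β : ℝ, 0 < specRadOn (Amat src rng F β) C) ∧
    Continuous (fun β : ℝ => specRadOn (Amat src rng F β) C) ∧
    (∀ β β' t : ℝ, 0 ≤ t → t ≤ 1 →
      specRadOn (Amat src rng F (t * β + (1 - t) * β')) C ≤
        specRadOn (Amat src rng F β) C ^ t *
          specRadOn (Amat src rng F β') C ^ (1 - t)) := by
  obtain ⟨μ, hμ⟩ := hC
  have hpos := hμ.specRadOn_Amat_pos F
  have hlog := convexOn_log_of_le_rpow_mul_rpow hpos fun β β' _ _ =>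
    specRadOn_Amat_le_rpow_mul_rpow src rng F C β β'
  exact ⟨hpos, continuous_of_convexOn_log hpos hlog, fun β β' t ht₀ ht₁ =>
    specRadOn_Amat_le_rpow_mul_rpow src rng F C β β' ht₀ (sub_nonneg.2 ht₁)
      (add_sub_cancel t 1)⟩

/-- For any component `C`, the function `β ↦ ρ(A(β)^C)` is strictly positive, continuous
and log-convex. -/
theorem specRad_component_logConvex {V E : Type*} [Fintype V] [DecidableEq V] [Fintype E]
    (src rng : E → V) (F : E → ℝ)
    (C : Set V) (hC : GIsComponent src rng C) :
    (∀ β : ℝ, 0 < specRadOn (Amat src rng F β) C) ∧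
    Continuous (fun β : ℝ => specRadOn (Amat src rng F β) C) ∧
    (∀ β β' t : ℝ, 0 ≤ t → t ≤ 1 →
      specRadOn (Amat src rng F (t * β + (1 - t) * β')) C ≤
        specRadOn (Amat src rng F β) C ^ t *
          specRadOn (Amat src rng F β') C ^ (1 - t)) := by
  exact specRad_component_logConvex_general src rng F C hC.2
end
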